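/- Clifford decomposition of the cocenter: Let A be an associative algebra with an automorphism δ of finite order d, A' = A ⋊ ⟨δ⟩, and Ā' = A'/[A',A']. Then (1) Ā' = ⊕_{i=0}^{d−1} Aδ^i/([A',A'] ∩ Aδ^i); and (2) for each i, the map h ↦ hδ^i induces a linear isomorphism from Ā^{[i]} onto Aδ^i/([A',A'] ∩ Aδ^i), where Ā^{[i]} is the quotient of A/[A,A]_{δ^i} by the image of (1−δ). -/

import Mathlib

/-!
Write `Q i = A / ([A,A]_{δⁱ} + (1 - δ)A)`. In the crossed product,
`[a, b uⁱ] = (ab - b δⁱ(a)) uⁱ` and `[u, a uⁱ u⁻¹] = (δ(a) - a) uⁱ`, so `a ↦ a uⁱ` descends to a map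
`θᵢ : Q i → Ā'`, whose range is the image of `A uⁱ` (`cliffordMap`).

Conversely, reading off the coefficient of `uⁱ` gives `A' → A → Q i`, and this kills commutators:
`[a uⁿ, b uᵐ] = (a δⁿ(b) - b δᵐ(a)) uⁿ⁺ᵐ`, and with `c = δⁿ(b)` the second term is
`δ⁻ⁿ(c) δᵐ(a)`, which modulo `(1 - δ)A` equals `c δⁿ⁺ᵐ(a)`; so the coefficient is the twisted
commutator `ac - c δⁿ⁺ᵐ(a)` modulo `(1 - δ)A`. It therefore descends to `ψᵢ : Ā' → Q i`
(`exists_cliffordProj`), with `ψᵢ ∘ θᵢ = id` and `ψᵢ ∘ θⱼ = 0` for `i ≠ j`.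
These relations give both the injectivity of `θᵢ` and the independence of the ranges.
-/

set_option linter.unusedSectionVars false

noncomputable section

open scoped BigOperators

section CocenterDefs

variable (Lam H : Type) [CommRing Lam] [Ring H] [Algebra Lam H]

/-- The `Λ`-submodule of an algebra spanned by all commutators. -/
def commutatorSubmodule : Submodule Lam H :=
  Submodule.span Lam {z : H | ∃ a b : H, z = a * b - b * a}

/-- The cocenter of an algebra: the quotient by the span of commutators. -/
abbrev Cocenter := H ⧸ commutatorSubmodule Lam H

/-- The projection onto the cocenter. -/
def toCocenter : H →ₗ[Lam] Cocenter Lam H := (commutatorSubmodule Lam H).mkQ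

variable {Lam} {H₁ H₂ : Type} [Ring H₁] [Ring H₂] [Algebra Lam H₁] [Algebra Lam H₂]

/-- The map on cocenters induced by an algebra homomorphism. -/
def cocenterMap (f : H₁ →ₐ[Lam] H₂) : Cocenter Lam H₁ →ₗ[Lam] Cocenter Lam H₂ :=
  Submodule.mapQ _ _ f.toLinearMap (by
    rw [commutatorSubmodule, Submodule.span_le]
    rintro z ⟨a, b, rfl⟩
    simp only [SetLike.mem_coe, Submodule.mem_comap, AlgHom.toLinearMap_apply, map_sub, map_mul]
    exact Submodule.subset_span ⟨f a, f b, rfl⟩)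

end CocenterDefs

section Twisted

variable (Lam H : Type) [CommRing Lam] [Ring H] [Algebra Lam H]

/-- The `Λ`-submodule spanned by all `δ`-twisted commutators `a*b - b*δ(a)`. -/
def twistedCommutatorSubmodule (δ : H →ₐ[Lam] H) : Submodule Lam H :=
  Submodule.span Lam {z : H | ∃ a b : H, z = a * b - b * δ a}

/-- The `δ`-twisted cocenter `H̄_δ = H/[H,H]_δ`. -/
abbrev TwistedCocenter (δ : H →ₐ[Lam] H) := H ⧸ twistedCommutatorSubmodule Lam H δ

/-- The projection onto the `δ`-twisted cocenter. -/
def toTwistedCocenter (δ : H →ₐ[Lam] H) : H →ₗ[Lam] TwistedCocenter Lam H δ :=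
  (twistedCommutatorSubmodule Lam H δ).mkQ

end Twisted

section CliffordHelpers

variable {A : Type} [Ring A] [Algebra ℂ A] {A' : Type} [Ring A'] [Algebra ℂ A']

/-- The map `a ↦ ι(a) uⁱ` from `A` to the crossed product. -/
def homogMap (ι : A →ₐ[ℂ] A') (u : A'ˣ) (i : ℕ) : A →ₗ[ℂ] A' :=
  (LinearMap.mulRight ℂ ((u : A') ^ i)).comp ι.toLinearMap

lemma homogMap_apply (ι : A →ₐ[ℂ] A') (u : A'ˣ) (i : ℕ) (a : A) :
    homogMap ι u i a = ι a * (u : A') ^ i := rfl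

lemma span_eq_range_homogMap (ι : A →ₐ[ℂ] A') (u : A'ˣ) (i : ℕ) :
    Submodule.span ℂ {z : A' | ∃ a : A, z = ι a * (u : A') ^ i} =
      LinearMap.range (homogMap ι u i) := by
  have h : {z : A' | ∃ a : A, z = ι a * (u : A') ^ i} =
      (LinearMap.range (homogMap ι u i) : Set A') := by
    ext z
    simp [homogMap_apply, eq_comm]
  rw [h, Submodule.span_eq]

lemma homogMap_injective (ι : A →ₐ[ℂ] A') (hinj : Function.Injective ι) (u : A'ˣ) (i : ℕ) :
    Function.Injective (homogMap ι u i) := by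
  intro a b h
  apply hinj
  have h' : ι a * ((u ^ i : A'ˣ) : A') = ι b * ((u ^ i : A'ˣ) : A') := by
    rw [Units.val_pow_eq_pow_val]
    exact h
  exact (Units.mul_left_inj _).1 h'

/-- The subspace `[A,A]_{δⁱ} + (1 - δ)A` of `A`, by which one divides to obtain `Ā^{[i]}`. -/
abbrev cliffordRel (δ : A ≃ₐ[ℂ] A) (i : ℕ) : Submodule ℂ A :=
  twistedCommutatorSubmodule ℂ A (δ ^ i).toAlgHom ⊔ Submodule.span ℂ {z : A | ∃ a : A, z = a - δ a}

lemma mkQ_pow_apply (δ : A ≃ₐ[ℂ] A) (i n : ℕ) (a : A) :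
    (cliffordRel δ i).mkQ ((δ ^ n) a) = (cliffordRel δ i).mkQ a := by
  induction n with
  | zero => rfl
  | succ n ih =>
    rw [← ih, pow_succ', AlgEquiv.mul_apply, eq_comm, ← sub_eq_zero, ← map_sub]
    exact (Submodule.Quotient.mk_eq_zero _).2
      (Submodule.mem_sup_right (Submodule.subset_span ⟨_, rfl⟩))

lemma mkQ_mul_twisted (δ : A ≃ₐ[ℂ] A) (i : ℕ) (a b : A) :
    (cliffordRel δ i).mkQ (b * (δ ^ i) a) = (cliffordRel δ i).mkQ (a * b) := by
  rw [eq_comm, ← sub_eq_zero, ← map_sub]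
  exact (Submodule.Quotient.mk_eq_zero _).2
    (Submodule.mem_sup_left (Submodule.subset_span ⟨a, b, rfl⟩))

/-- The coefficient of `[a uⁿ, b uᵐ]` vanishes in `Ā^{[i]}` when `δⁿ⁺ᵐ = δⁱ`. -/
lemma mkQ_commutator_coeff (δ : A ≃ₐ[ℂ] A) (i n m : ℕ) (h : δ ^ (n + m) = δ ^ i) (a b : A) :
    (cliffordRel δ i).mkQ (a * (δ ^ n) b) = (cliffordRel δ i).mkQ (b * (δ ^ m) a) := by
  rw [← mkQ_mul_twisted, ← h, ← mkQ_pow_apply δ i n (b * (δ ^ m) a), map_mul (δ ^ n), pow_add,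
    AlgEquiv.mul_apply]

lemma pow_mul_cross {δ : A ≃ₐ[ℂ] A} {ι : A →ₐ[ℂ] A'} {u : A'ˣ}
    (hcross : ∀ a : A, (u : A') * ι a = ι (δ a) * (u : A')) (n : ℕ) (a : A) :
    (u : A') ^ n * ι a = ι ((δ ^ n) a) * (u : A') ^ n := by
  induction n generalizing a with
  | zero => simp
  | succ n ih =>
    rw [pow_succ, mul_assoc, hcross, ← mul_assoc, ih, mul_assoc, pow_succ δ, AlgEquiv.mul_apply]

lemma homogMap_mul_homogMap {δ : A ≃ₐ[ℂ] A} {ι : A →ₐ[ℂ] A'} {u : A'ˣ}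
    (hcross : ∀ a : A, (u : A') * ι a = ι (δ a) * (u : A')) (n m : ℕ) (a b : A) :
    homogMap ι u n a * homogMap ι u m b = homogMap ι u (n + m) (a * (δ ^ n) b) := by
  simp only [homogMap_apply, map_mul, pow_add]
  rw [mul_assoc, ← mul_assoc (_ ^ n), pow_mul_cross hcross]
  simp only [mul_assoc]

lemma toCocenter_mul_comm (x y : A') : toCocenter ℂ A' (x * y) = toCocenter ℂ A' (y * x) := by
  rw [← sub_eq_zero, ← map_sub]
  exact (Submodule.Quotient.mk_eq_zero _).2 (Submodule.subset_span ⟨x, y, rfl⟩)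

lemma cliffordRel_le_ker {δ : A ≃ₐ[ℂ] A} {ι : A →ₐ[ℂ] A'} {u : A'ˣ}
    (hcross : ∀ a : A, (u : A') * ι a = ι (δ a) * (u : A')) (i : ℕ) :
    cliffordRel δ i ≤ LinearMap.ker ((toCocenter ℂ A').comp (homogMap ι u i)) := by
  refine sup_le (Submodule.span_le.2 ?_) (Submodule.span_le.2 ?_)
  · rintro _ ⟨a, b, rfl⟩
    have h1 := homogMap_mul_homogMap hcross 0 i a b
    have h2 := homogMap_mul_homogMap hcross i 0 b a
    simp only [zero_add, add_zero, pow_zero, AlgEquiv.one_apply] at h1 h2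
    rw [SetLike.mem_coe, LinearMap.mem_ker, map_sub, sub_eq_zero]
    change toCocenter ℂ A' (homogMap ι u i (a * b)) =
      toCocenter ℂ A' (homogMap ι u i (b * (δ ^ i) a))
    rw [← h1, ← h2, toCocenter_mul_comm]
  · rintro _ ⟨a, rfl⟩
    rw [SetLike.mem_coe, LinearMap.mem_ker, map_sub, sub_eq_zero]
    -- `δ(a) uⁱ = u (a uⁱ) u⁻¹`
    have h : homogMap ι u i (δ a) = (u : A') * (homogMap ι u i a * (u⁻¹ : A'ˣ)) := by
      rw [← mul_assoc, Units.eq_mul_inv_iff_mul_eq, homogMap_apply, homogMap_apply, ← mul_assoc,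
        hcross, mul_assoc, mul_assoc, ← pow_succ, ← pow_succ']
    change toCocenter ℂ A' (homogMap ι u i a) = toCocenter ℂ A' (homogMap ι u i (δ a))
    rw [h, toCocenter_mul_comm, mul_assoc, Units.inv_mul, mul_one]

/-- The map `θᵢ : Ā^{[i]} → Ā'` induced by `a ↦ ι(a) uⁱ`. -/
def cliffordMap {δ : A ≃ₐ[ℂ] A} {ι : A →ₐ[ℂ] A'} {u : A'ˣ}
    (hcross : ∀ a : A, (u : A') * ι a = ι (δ a) * (u : A')) (i : ℕ) :
    (A ⧸ cliffordRel δ i) →ₗ[ℂ] Cocenter ℂ A' :=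
  (cliffordRel δ i).liftQ _ (cliffordRel_le_ker hcross i)

lemma range_cliffordMap {δ : A ≃ₐ[ℂ] A} {ι : A →ₐ[ℂ] A'} {u : A'ˣ}
    (hcross : ∀ a : A, (u : A') * ι a = ι (δ a) * (u : A')) (i : ℕ) :
    LinearMap.range (cliffordMap hcross i) = Submodule.map (toCocenter ℂ A')
        (Submodule.span ℂ {z : A' | ∃ a : A, z = ι a * (u : A') ^ i}) := by
  rw [cliffordMap, Submodule.range_liftQ, LinearMap.range_comp, span_eq_range_homogMap]

/-- The coefficient of `uⁱ` is a linear map from the crossed product to `A`. -/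
lemma exists_coeff {d : ℕ} {ι : A →ₐ[ℂ] A'} (hinj : Function.Injective ι) {u : A'ˣ}
    (hsum : (⨆ i : Fin d, LinearMap.range (homogMap ι u i)) = ⊤)
    (hind : iSupIndep fun i : Fin d => LinearMap.range (homogMap ι u i)) (i : Fin d) :
    ∃ c : A' →ₗ[ℂ] A, ∀ (j : Fin d) (a : A),
      c (homogMap ι u j a) = if j = i then a else 0 := by
  have hint := DirectSum.isInternal_submodule_of_iSupIndep_of_iSup_eq_top hind hsum
  let E := LinearEquiv.ofBijective
    (DirectSum.coeLinearMap fun i : Fin d => LinearMap.range (homogMap ι u i)) hint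
  let F := LinearEquiv.ofInjective (homogMap ι u i) (homogMap_injective ι hinj u i)
  refine ⟨F.symm.toLinearMap ∘ₗ DirectSum.component ℂ (Fin d) _ i ∘ₗ E.symm.toLinearMap, ?_⟩
  intro j a
  have hE : E.symm (homogMap ι u j a) =
      DirectSum.lof ℂ (Fin d) (fun i : Fin d => LinearMap.range (homogMap ι u i)) j
        ⟨homogMap ι u j a, a, rfl⟩ := by
    rw [LinearEquiv.symm_apply_eq]
    exact (DirectSum.coeLinearMap_lof (fun i : Fin d => LinearMap.range (homogMap ι u i)) j
      ⟨homogMap ι u j a, a, rfl⟩).symm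
  simp only [LinearMap.comp_apply, LinearEquiv.coe_coe, hE]
  by_cases h : j = i
  · subst h
    rw [DirectSum.component.lof_self, if_pos rfl, LinearEquiv.symm_apply_eq]
    rfl
  · rw [DirectSum.component.of, dif_neg h, map_zero, if_neg h]

/-- The map `ψᵢ : Ā' → Ā^{[i]}` induced by the coefficient of `uⁱ`. -/
lemma exists_cliffordProj {d : ℕ} (hd : 0 < d) {δ : A ≃ₐ[ℂ] A} (hord : orderOf δ = d)
    {ι : A →ₐ[ℂ] A'} (hinj : Function.Injective ι) {u : A'ˣ} (hu_ord : (u : A') ^ d = 1)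
    (hcross : ∀ a : A, (u : A') * ι a = ι (δ a) * (u : A'))
    (hsum : (⨆ i : Fin d, LinearMap.range (homogMap ι u i)) = ⊤)
    (hind : iSupIndep fun i : Fin d => LinearMap.range (homogMap ι u i)) (i : Fin d) :
    ∃ ψ : Cocenter ℂ A' →ₗ[ℂ] (A ⧸ cliffordRel δ i), ∀ (j : Fin d) (a : A),
      ψ (toCocenter ℂ A' (homogMap ι u j a)) =
        if j = i then (cliffordRel δ i).mkQ a else 0 := by
  obtain ⟨c, hc⟩ := exists_coeff hinj hsum hind i
  have hc' : ∀ (n : ℕ) (a : A), c (homogMap ι u n a) = if n % d = i then a else 0 := by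
    intro n a
    have h := hc ⟨n % d, Nat.mod_lt _ hd⟩ a
    have hmod : (u : A') ^ (n % d) = (u : A') ^ n := (pow_eq_pow_mod n hu_ord).symm
    simpa [homogMap_apply, hmod, Fin.ext_iff] using h
  have hspan : ∀ x : A', x ∈ Submodule.span ℂ {z : A' | ∃ n a, z = homogMap ι u n a} := by
    intro x
    have hx : x ∈ (⨆ i : Fin d, LinearMap.range (homogMap ι u i)) := hsum ▸ Submodule.mem_top
    refine (iSup_le fun j => ?_ : (⨆ i : Fin d, LinearMap.range (homogMap ι u i)) ≤ _) hx
    rintro _ ⟨a, rfl⟩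
    exact Submodule.subset_span ⟨j, a, rfl⟩
  have hcomm : ∀ x y : A',
      (cliffordRel δ i).mkQ (c (x * y)) = (cliffordRel δ i).mkQ (c (y * x)) := by
    intro x y
    induction hspan x, hspan y using Submodule.span_induction₂ with
    | mem_mem x y hx hy =>
      obtain ⟨n, a, rfl⟩ := hx
      obtain ⟨m, b, rfl⟩ := hy
      rw [homogMap_mul_homogMap hcross, homogMap_mul_homogMap hcross, hc', hc', add_comm m n]
      split_ifs with h
      · refine mkQ_commutator_coeff δ i n m ?_ a b
        rw [← pow_mod_orderOf, hord, h]
      · rfl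
    | zero_left y => simp
    | zero_right x => simp
    | add_left x y z _ _ _ h1 h2 => simp only [add_mul, mul_add, map_add, h1, h2]
    | add_right x y z _ _ _ h1 h2 => simp only [add_mul, mul_add, map_add, h1, h2]
    | smul_left r x y _ _ h => simp only [smul_mul_assoc, mul_smul_comm, map_smul, h]
    | smul_right r x y _ _ h => simp only [smul_mul_assoc, mul_smul_comm, map_smul, h]
  refine ⟨(commutatorSubmodule ℂ A').liftQ ((cliffordRel δ i).mkQ ∘ₗ c)
    (Submodule.span_le.2 ?_), ?_⟩
  · rintro _ ⟨x, y, rfl⟩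
    simp only [SetLike.mem_coe, LinearMap.mem_ker, LinearMap.comp_apply, map_sub, hcomm x y,
      sub_self]
  · intro j a
    change (cliffordRel δ i).mkQ (c (homogMap ι u j a)) = _
    rw [hc]
    split_ifs <;> simp

end CliffordHelpers

/-- **Clifford decomposition of the cocenter** (Ciubotaru–He, Proposition 3.2; cf. [CH,
Proposition 3.1.1]).
Let `A` be an associative `ℂ`-algebra with an algebra automorphism `δ` of finite order `d`, and
let `A' = A ⋊ ⟨δ⟩` be the crossed product: `A'` contains `A` (via the injective map `ι`) and a
unit `u` (the image of `δ`) with `u^d = 1` and `u·ι(a)·u⁻¹ = ι(δ(a))`, and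
`A' = ⊕_{i=0}^{d-1} ι(A)·uⁱ`.  Let `Ā' = A'/[A',A']` be the cocenter.  Then:
(1) `Ā' = ⊕_{i=0}^{d-1} A·δⁱ/([A',A'] ∩ A·δⁱ)` — the images in the cocenter of the subspaces
`ι(A)·uⁱ` are independent and sum to everything; and
(2) for each `i`, the map `h ↦ h·δⁱ` induces a linear isomorphism from `Ā^{[i]}` onto
`A·δⁱ/([A',A'] ∩ A·δⁱ)` (the image of `ι(A)·uⁱ` in the cocenter), where `Ā^{[i]}` is the
quotient of `A/[A,A]_{δⁱ}` by the image of `1 - δ`, i.e. the quotient of `A` by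
`[A,A]_{δⁱ} ⊔ span{a - δ(a)}`. -/
theorem clifford_decomposition_of_cocenter
    (A : Type) [Ring A] [Algebra ℂ A]
    (d : ℕ) (hd : 0 < d)
    (δ : A ≃ₐ[ℂ] A) (hord : orderOf δ = d)
    (A' : Type) [Ring A'] [Algebra ℂ A']
    (ι : A →ₐ[ℂ] A') (hinj : Function.Injective ι)
    (u : A'ˣ)
    (hu_ord : (u : A') ^ d = 1)
    (hcross : ∀ a : A, (u : A') * ι a = ι (δ a) * (u : A'))
    -- the crossed product decomposition `A' = ⊕_{i<d} ι(A)·uⁱ`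
    (hsum : (⨆ i : Fin d,
      Submodule.span ℂ {z : A' | ∃ a : A, z = ι a * (u : A') ^ (i : ℕ)}) = ⊤)
    (hind : iSupIndep fun i : Fin d =>
      Submodule.span ℂ {z : A' | ∃ a : A, z = ι a * (u : A') ^ (i : ℕ)}) :
    ((⨆ i : Fin d, Submodule.map (toCocenter ℂ A')
        (Submodule.span ℂ {z : A' | ∃ a : A, z = ι a * (u : A') ^ (i : ℕ)})) = ⊤ ∧
      iSupIndep fun i : Fin d => Submodule.map (toCocenter ℂ A')
        (Submodule.span ℂ {z : A' | ∃ a : A, z = ι a * (u : A') ^ (i : ℕ)})) ∧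
    (∀ i : Fin d, ∃ e :
        (A ⧸ (twistedCommutatorSubmodule ℂ A (δ ^ (i : ℕ)).toAlgHom ⊔
          Submodule.span ℂ {z : A | ∃ a : A, z = a - δ a})) ≃ₗ[ℂ]
        ↥(Submodule.map (toCocenter ℂ A')
          (Submodule.span ℂ {z : A' | ∃ a : A, z = ι a * (u : A') ^ (i : ℕ)})),
      ∀ a : A, (e (Submodule.Quotient.mk a) : Cocenter ℂ A') =
        toCocenter ℂ A' (ι a * (u : A') ^ (i : ℕ))) := by
  simp only [span_eq_range_homogMap] at hsum hind
  choose ψ hψ using fun i : Fin d =>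
    exists_cliffordProj hd hord hinj hu_ord hcross hsum hind i
  have hself : ∀ (i : Fin d) (q : A ⧸ cliffordRel δ i), ψ i (cliffordMap hcross i q) = q := by
    intro i q
    obtain ⟨a, rfl⟩ := Submodule.mkQ_surjective _ q
    exact (hψ i i a).trans (if_pos rfl)
  refine ⟨⟨?_, ?_⟩, ?_⟩
  · simp only [span_eq_range_homogMap]
    rw [← Submodule.map_iSup, hsum, Submodule.map_top, toCocenter, Submodule.range_mkQ]
  · simp only [← range_cliffordMap hcross]
    intro i
    rw [Submodule.disjoint_def]
    rintro _ ⟨q, rfl⟩ hx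
    have hle : (⨆ j : Fin d, ⨆ (_ : j ≠ i), LinearMap.range (cliffordMap hcross (j : ℕ))) ≤
        LinearMap.ker (ψ i) := by
      refine iSup₂_le fun j hj => ?_
      rintro _ ⟨q, rfl⟩
      obtain ⟨a, rfl⟩ := Submodule.mkQ_surjective _ q
      exact (hψ i j a).trans (if_neg hj)
    have h0 : ψ i (cliffordMap hcross i q) = 0 := hle hx
    rw [hself] at h0
    rw [h0, map_zero]
  · intro i
    have hi : Function.Injective (cliffordMap hcross (i : ℕ)) :=
      Function.LeftInverse.injective (hself i)
    exact ⟨(LinearEquiv.ofInjective _ hi).trans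
      (LinearEquiv.ofEq _ _ (range_cliffordMap hcross i)), fun a => rfl⟩
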